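/- Let 0 < ε < √2·log 2 and let δ ∈ (ε, 1) satisfy g(δ, ε) = 0. If x⁻, x⁺ ∈ Ω_ε and the midpoint (x⁻ + x⁺)/2 ∈ Ω_ε, then B⁺_δ((x⁻ + x⁺)/2) ≥ (1/2)·B⁺_δ(x⁻) + (1/2)·B⁺_δ(x⁺). -/

import Mathlib

open MeasureTheory Real
/-- The parabolic strip `Ω_ε = {x : x₁² ≤ x₂ ≤ x₁² + ε²}`. -/
def Omega (ε : ℝ) : Set (ℝ × ℝ) := {x | x.1 ^ 2 ≤ x.2 ∧ x.2 ≤ x.1 ^ 2 + ε ^ 2}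

/-- The upper Bellman function `B⁺_δ`. -/
noncomputable def Bp (δ : ℝ) (x : ℝ × ℝ) : ℝ :=
  (1 - Real.sqrt (δ ^ 2 + x.1 ^ 2 - x.2)) / (1 - δ) *
    Real.exp (x.1 + Real.sqrt (δ ^ 2 + x.1 ^ 2 - x.2) - δ)

/-- The lower Bellman function `B⁻_δ`. -/
noncomputable def Bm (δ : ℝ) (x : ℝ × ℝ) : ℝ :=
  (1 + Real.sqrt (δ ^ 2 + x.1 ^ 2 - x.2)) / (1 + δ) *
    Real.exp (x.1 - Real.sqrt (δ ^ 2 + x.1 ^ 2 - x.2) + δ)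
/-- The function `g(δ,ε)` whose root determines the sharp dyadic parameter `δ⁺(ε)`. -/
noncomputable def g (δ ε : ℝ) : ℝ :=
  (1 - Real.sqrt (δ ^ 2 - ε ^ 2)) * Real.exp (Real.sqrt (δ ^ 2 - ε ^ 2)) *
      (2 - Real.exp (ε / Real.sqrt 2)) -
    (1 - δ) * Real.exp (δ - ε / Real.sqrt 2)


lemma le_of_sq_le_sq_aux {x y : ℝ} (h : x ^ 2 ≤ y ^ 2) (hy : 0 ≤ y) : x ≤ y :=
  abs_le_of_sq_le_sq' h hy |>.2

/-- Quasi-concavity: a function whose derivative changes sign only from `+` to `-`. -/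
lemma qc {Y Y' : ℝ → ℝ} {p q x : ℝ} (hx : x ∈ Set.Icc p q)
    (hd : ∀ s ∈ Set.Icc p q, HasDerivAt Y (Y' s) s)
    (hN : ∀ u ∈ Set.Ioo p q, ∀ v ∈ Set.Ioo p q, u < v → 0 < Y' v → 0 ≤ Y' u)
    (hp : 0 ≤ Y p) (hq : 0 ≤ Y q) : 0 ≤ Y x := by
  by_contra hneg
  push Not at hneg
  have h1 : p < x := lt_of_le_of_ne hx.1 (by rintro rfl; linarith)
  have h2 : x < q := lt_of_le_of_ne hx.2 (by rintro rfl; linarith)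
  obtain ⟨u, hu, hu'⟩ := exists_hasDerivAt_eq_slope Y Y' h1
    (fun s hs => (hd s ⟨hs.1, hs.2.trans hx.2⟩).continuousAt.continuousWithinAt)
    (fun s hs => hd s ⟨hs.1.le, hs.2.le.trans hx.2⟩)
  obtain ⟨v, hv, hv'⟩ := exists_hasDerivAt_eq_slope Y Y' h2
    (fun s hs => (hd s ⟨hx.1.trans hs.1, hs.2⟩).continuousAt.continuousWithinAt)
    (fun s hs => hd s ⟨hx.1.trans hs.1.le, hs.2.le⟩)
  have hu0 : Y' u < 0 := by
    rw [hu']; exact div_neg_of_neg_of_pos (by linarith) (by linarith)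
  have hv0 : 0 < Y' v := by
    rw [hv']; exact div_pos (by linarith) (by linarith)
  have := hN u ⟨hu.1, hu.2.trans h2⟩ v ⟨h1.trans hv.1, hv.2⟩ (hu.2.trans hv.1) hv0
  linarith

noncomputable def FF (s : ℝ) : ℝ := (1 - s) * Real.exp s

lemma FF_deriv (s : ℝ) : HasDerivAt FF (-(s * Real.exp s)) s := by
  have h := ((hasDerivAt_id s).const_sub 1).mul (Real.hasDerivAt_exp s)
  refine h.congr_deriv ?_
  simp only [id]; ring

lemma FF_anti {x y : ℝ} (hx : 0 ≤ x) (hxy : x ≤ y) : FF y ≤ FF x := by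
  have : AntitoneOn FF (Set.Ici 0) := by
    apply antitoneOn_of_hasDerivWithinAt_nonpos (convex_Ici 0)
      (fun s _ => (FF_deriv s).continuousAt.continuousWithinAt)
      (fun s _ => (FF_deriv s).hasDerivWithinAt)
    intro s hs
    rw [interior_Ici] at hs
    have := mul_pos hs (Real.exp_pos s)
    linarith
  exact this hx (Set.mem_Ici.2 (hx.trans hxy)) hxy

lemma FF_tangent {s r : ℝ} (hs : 0 ≤ s) (hr : 0 ≤ r) :
    FF s ≤ FF r - Real.exp r * (s ^ 2 - r ^ 2) / 2 := by
  let h : ℝ → ℝ := fun s => FF s + Real.exp r * (s ^ 2 - r ^ 2) / 2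
  have hd : ∀ s, HasDerivAt h (s * (Real.exp r - Real.exp s)) s := by
    intro s
    have h1 := (FF_deriv s).add
      (((((hasDerivAt_id s).pow 2).sub_const (r ^ 2)).const_mul (Real.exp r)).div_const 2)
    refine h1.congr_deriv ?_
    simp only [id]; norm_num; ring
  have hm : h s ≤ h r := by
    rcases le_total s r with hsr | hsr
    · have : MonotoneOn h (Set.Icc 0 r) := by
        apply monotoneOn_of_hasDerivWithinAt_nonneg (convex_Icc 0 r)
          (fun s _ => (hd s).continuousAt.continuousWithinAt)
          (fun s _ => (hd s).hasDerivWithinAt)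
        intro s hs
        rw [interior_Icc] at hs
        exact mul_nonneg hs.1.le (sub_nonneg.2 (Real.exp_le_exp.2 hs.2.le))
      exact this ⟨hs, hsr⟩ ⟨hr, le_rfl⟩ hsr
    · have : AntitoneOn h (Set.Ici r) := by
        apply antitoneOn_of_hasDerivWithinAt_nonpos (convex_Ici r)
          (fun s _ => (hd s).continuousAt.continuousWithinAt)
          (fun s _ => (hd s).hasDerivWithinAt)
        intro s hs
        rw [interior_Ici] at hs
        exact mul_nonpos_of_nonneg_of_nonpos (hr.trans (le_of_lt hs))
          (sub_nonpos.2 (Real.exp_le_exp.2 (le_of_lt hs)))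
      exact this (Set.mem_Ici.2 le_rfl) (Set.mem_Ici.2 hsr) hsr
  simp only [h] at hm
  have : Real.exp r * (r ^ 2 - r ^ 2) / 2 = 0 := by ring
  linarith

/-- The segment stays in the large strip. -/
lemma caseA {a b c t : ℝ} (ha : 0 ≤ a) (hb : 0 ≤ b) (ht : 0 ≤ t) (hc : t ≤ c)
    (h : a ^ 2 + b ^ 2 = 2 * c ^ 2 + 2 * t ^ 2) :
    FF a * Real.exp (-t) + FF b * Real.exp t ≤ 2 * FF c := by
  have h1 := mul_le_mul_of_nonneg_right
    (FF_tangent ha (show 0 ≤ c + t by linarith)) (Real.exp_pos (-t)).le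
  have h2 := mul_le_mul_of_nonneg_right
    (FF_tangent hb (show 0 ≤ c - t by linarith)) (Real.exp_pos t).le
  have e1 : Real.exp (c + t) * Real.exp (-t) = Real.exp c := by
    rw [← Real.exp_add]; congr 1; ring
  have e2 : Real.exp (c - t) * Real.exp t = Real.exp c := by
    rw [← Real.exp_add]; congr 1; ring
  have h3 : (FF (c + t) - Real.exp (c + t) * (a ^ 2 - (c + t) ^ 2) / 2) * Real.exp (-t)
      = Real.exp c * (1 - (c + t) - (a ^ 2 - (c + t) ^ 2) / 2) := by
    rw [← e1, FF]; ring
  have h4 : (FF (c - t) - Real.exp (c - t) * (b ^ 2 - (c - t) ^ 2) / 2) * Real.exp t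
      = Real.exp c * (1 - (c - t) - (b ^ 2 - (c - t) ^ 2) / 2) := by
    rw [← e2, FF]; ring
  rw [h3] at h1
  rw [h4] at h2
  have hb2 : b ^ 2 = 2 * c ^ 2 + 2 * t ^ 2 - a ^ 2 := by linarith
  rw [hb2] at h2
  calc _ ≤ _ := add_le_add h1 h2
    _ = 2 * FF c := by rw [FF]; ring

lemma sqrt_deriv_aux (K m s : ℝ) (h : 0 < K + m * s ^ 2) :
    HasDerivAt (fun s => Real.sqrt (K + m * s ^ 2)) (m * s / Real.sqrt (K + m * s ^ 2)) s := by
  have h1 := ((((hasDerivAt_id s).pow 2).const_mul m).const_add K).sqrt h.ne'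
  refine h1.congr_deriv ?_
  simp only [id]
  have : Real.sqrt (K + m * s ^ 2) ≠ 0 := (Real.sqrt_pos.2 h).ne'
  have e : Real.sqrt (K + m * (id ^ 2 : ℝ → ℝ) s) = Real.sqrt (K + m * s ^ 2) := rfl
  rw [e]
  push_cast
  field_simp

lemma FF_sqrt_deriv (K m s : ℝ) (h : 0 < K + m * s ^ 2) :
    HasDerivAt (fun s => FF (Real.sqrt (K + m * s ^ 2)))
      (-(m * s * Real.exp (Real.sqrt (K + m * s ^ 2)))) s := by
  have h1 := (FF_deriv (Real.sqrt (K + m * s ^ 2))).comp s (sqrt_deriv_aux K m s h)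
  refine h1.congr_deriv ?_
  have : Real.sqrt (K + m * s ^ 2) ≠ 0 := (Real.sqrt_pos.2 h).ne'
  field_simp

/-- Pushing the midpoint to the upper boundary. -/
lemma stepC {a b c d t : ℝ} (ha : 0 ≤ a) (hb : 0 ≤ b) (hd : 0 < d) (hdc : d ≤ c) (hct : c ≤ t)
    (h : a ^ 2 + b ^ 2 = 2 * c ^ 2 + 2 * t ^ 2)
    (hend : ∀ t1, 0 ≤ t1 → a ^ 2 + b ^ 2 = 2 * d ^ 2 + 2 * t1 ^ 2 →
      FF a * Real.exp (-t1) + FF b * Real.exp t1 ≤ 2 * FF d) :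
    FF a * Real.exp (-t) + FF b * Real.exp t ≤ 2 * FF c := by
  have hc0 : 0 < c := hd.trans_le hdc
  have ht0 : 0 < t := hc0.trans_le hct
  set K := c ^ 2 + t ^ 2 with hK
  have hKd : 0 ≤ K - d ^ 2 := by nlinarith
  set p := Real.sqrt (K / 2) with hp
  set q := Real.sqrt (K - d ^ 2) with hq
  have hp2 : p ^ 2 = K / 2 := Real.sq_sqrt (by positivity)
  have hq2 : q ^ 2 = K - d ^ 2 := Real.sq_sqrt hKd
  have hp0 : 0 ≤ p := Real.sqrt_nonneg _
  have hq0 : 0 ≤ q := Real.sqrt_nonneg _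
  have hpt : p ≤ t := by nlinarith
  have htq : t ≤ q := by
    apply Real.le_sqrt_of_sq_le; nlinarith
  let C : ℝ → ℝ := fun s => Real.sqrt (K + (-1) * s ^ 2)
  have hCv : ∀ s, ∀ w, 0 ≤ w → w ^ 2 = K - s ^ 2 → C s = w := by
    intro s w hw hws
    simp only [C]
    rw [show K + (-1) * s ^ 2 = w ^ 2 by linarith, Real.sqrt_sq hw]
  let Y : ℝ → ℝ := fun s => 2 * (FF (C s) * Real.exp (-s)) - FF a * Real.exp (-(2 * s)) - FF b
  have hpos : ∀ s ∈ Set.Icc p q, d ^ 2 ≤ K + (-1) * s ^ 2 := by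
    intro s hs
    have : s ^ 2 ≤ q ^ 2 := by nlinarith [hs.1, hs.2]
    linarith
  have hYval : ∀ s, ∀ w, 0 ≤ w → w ^ 2 = K - s ^ 2 →
      (0 ≤ Y s ↔ FF a * Real.exp (-s) + FF b * Real.exp s ≤ 2 * FF w) := by
    intro s w hw hws
    have e : Real.exp s * Y s = 2 * FF w - (FF a * Real.exp (-s) + FF b * Real.exp s) := by
      simp only [Y, hCv s w hw hws]
      have e1 : Real.exp s * Real.exp (-s) = 1 := by rw [← Real.exp_add]; simp
      have e2 : Real.exp s * Real.exp (-(2 * s)) = Real.exp (-s) := by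
        rw [← Real.exp_add]; congr 1; ring
      linear_combination (2 * FF w) * e1 - FF a * e2
    rw [← mul_nonneg_iff_of_pos_left (Real.exp_pos s), e, sub_nonneg]
  rw [← hYval t c hc0.le (by rw [hK]; ring)]
  refine qc (Y := Y) (Y' := fun s => 2 * Real.exp (-(2 * s)) * (FF a - FF (s + C s)))
    (p := p) (q := q) ⟨hpt, htq⟩ ?_ ?_ ?_ ?_
  · intro s hs
    have hh : 0 < K + (-1) * s ^ 2 := lt_of_lt_of_le (by positivity) (hpos s hs)
    have d1 : HasDerivAt (fun s : ℝ => Real.exp (-s)) (-Real.exp (-s)) s := by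
      simpa using (hasDerivAt_id s).neg.exp
    have d2 : HasDerivAt (fun s : ℝ => Real.exp (-(2 * s))) (-2 * Real.exp (-(2 * s))) s := by
      have := (((hasDerivAt_id s).const_mul 2).neg).exp
      refine this.congr_deriv ?_
      simp only [id]; simp; ring
    have := ((((FF_sqrt_deriv K (-1) s hh).mul d1).const_mul 2).sub
      (d2.const_mul (FF a))).sub_const (FF b)
    refine this.congr_deriv ?_
    have e1 : Real.exp (-s) = Real.exp (-(2 * s)) * Real.exp s := by
      rw [← Real.exp_add]; congr 1; ring
    simp only [FF, C, Real.exp_add]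
    rw [e1]; ring
  · intro u hu v hv huv hpv
    have hu0 : 0 < u := lt_of_le_of_lt hp0 hu.1
    have hv0 : 0 < v := hu0.trans huv
    have hpv' : 0 < FF a - FF (v + C v) := by
      by_contra hcon
      push Not at hcon
      have := mul_nonpos_of_nonneg_of_nonpos
        (show 0 ≤ 2 * Real.exp (-(2 * v)) by positivity) hcon
      exact absurd hpv (not_lt.2 this)
    refine mul_nonneg (by positivity) ?_
    have hcu : C u ^ 2 = K + (-1) * u ^ 2 :=
      Real.sq_sqrt ((sq_nonneg d).trans (hpos u ⟨hu.1.le, hu.2.le⟩))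
    have hcv : C v ^ 2 = K + (-1) * v ^ 2 :=
      Real.sq_sqrt ((sq_nonneg d).trans (hpos v ⟨hv.1.le, hv.2.le⟩))
    have hcu0 : 0 ≤ C u := Real.sqrt_nonneg _
    have hcv0 : 0 ≤ C v := Real.sqrt_nonneg _
    have hup : p ^ 2 ≤ u ^ 2 := by nlinarith [hu.1]
    have huv2 : u ^ 2 ≤ v ^ 2 := by nlinarith
    have hle : v * C v ≤ u * C u := by
      apply le_of_sq_le_sq_aux _ (by positivity)
      rw [mul_pow, mul_pow, hcu, hcv]
      nlinarith [mul_nonneg (sub_nonneg.2 huv2) (show 0 ≤ u ^ 2 + v ^ 2 - K by linarith)]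
    have hsum : v + C v ≤ u + C u := by
      apply le_of_sq_le_sq_aux _ (by positivity)
      nlinarith
    have := FF_anti (by positivity) hsum
    linarith
  · rw [hYval p p hp0 (by linarith)]
    exact caseA ha hb hp0 le_rfl (by linarith)
  · rw [hYval q d hd.le (by linarith)]
    exact hend q hq0 (by linarith)

lemma sinh_aux {x y : ℝ} (hx : 0 < x) (hxy : x < y) :
    y * Real.sinh x ≤ x * Real.sinh y := by
  let k : ℝ → ℝ := fun z => x * Real.sinh z - z * Real.sinh x
  have hs : Real.sinh x ≤ x * Real.cosh x := by
    have : MonotoneOn (fun z => z * Real.cosh z - Real.sinh z) (Set.Ici 0) := by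
      have hd : ∀ z, HasDerivAt (fun z => z * Real.cosh z - Real.sinh z) (z * Real.sinh z) z := by
        intro z
        refine (((hasDerivAt_id z).mul (Real.hasDerivAt_cosh z)).sub
          (Real.hasDerivAt_sinh z)).congr_deriv ?_
        simp only [id]; ring
      apply monotoneOn_of_hasDerivWithinAt_nonneg (convex_Ici 0)
          (fun s _ => (hd s).continuousAt.continuousWithinAt)
          (fun s _ => (hd s).hasDerivWithinAt)
      intro s hs
      rw [interior_Ici] at hs
      exact mul_nonneg (le_of_lt hs) (Real.sinh_nonneg_iff.2 (le_of_lt hs))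
    have := this (Set.mem_Ici.2 le_rfl) (Set.mem_Ici.2 hx.le) hx.le
    simp at this
    linarith
  have : MonotoneOn k (Set.Ici x) := by
    have hd : ∀ z, HasDerivAt k (x * Real.cosh z - Real.sinh x) z := by
      intro z
      refine (((Real.hasDerivAt_sinh z).const_mul x).sub
        ((hasDerivAt_id z).mul_const (Real.sinh x))).congr_deriv ?_
      ring
    apply monotoneOn_of_hasDerivWithinAt_nonneg (convex_Ici x)
        (fun s _ => (hd s).continuousAt.continuousWithinAt)
        (fun s _ => (hd s).hasDerivWithinAt)
    intro s hs
    rw [interior_Ici] at hs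
    have hs' : x < s := hs
    have : Real.cosh x ≤ Real.cosh s := by
      rw [Real.cosh_le_cosh, abs_of_pos hx, abs_of_pos (hx.trans hs')]; exact hs'.le
    have := mul_le_mul_of_nonneg_left this hx.le
    linarith
  have := this (Set.mem_Ici.2 le_rfl) (Set.mem_Ici.2 hxy.le) hxy.le
  simp only [k] at this
  linarith

lemma exp_sub_one_sinh (x : ℝ) :
    Real.exp x - 1 = 2 * Real.exp (x / 2) * Real.sinh (x / 2) := by
  have h : Real.exp x = Real.exp (x / 2) * Real.exp (x / 2) := by
    rw [← Real.exp_add]; congr 1; ring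
  have h1 : Real.exp (x / 2) * Real.exp (-(x / 2)) = 1 := by rw [← Real.exp_add]; simp
  rw [Real.sinh_eq, h]
  linear_combination h1

/-- One endpoint and the midpoint on the upper boundary. -/
lemma step1 {d τ t : ℝ} (hd : 0 < d) (hd1 : d < 1) (ht : t ∈ Set.Icc 0 τ)
    (hτ : FF (Real.sqrt (d ^ 2 + 2 * τ ^ 2)) ≤
      FF d * (2 * Real.exp τ - Real.exp (2 * τ))) :
    FF (Real.sqrt (d ^ 2 + 2 * t ^ 2)) ≤ FF d * (2 * Real.exp t - Real.exp (2 * t)) := by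
  have hF : 0 < FF d := mul_pos (by linarith) (Real.exp_pos d)
  let A : ℝ → ℝ := fun s => Real.sqrt (d ^ 2 + 2 * s ^ 2)
  have key := qc (Y := fun s => FF d * (2 * Real.exp s - Real.exp (2 * s)) - FF (A s))
    (Y' := fun s => FF d * (2 * Real.exp s - 2 * Real.exp (2 * s)) + 2 * s * Real.exp (A s))
    ht ?_ ?_ ?_ ?_
  · simpa [A] using key
  · intro s hs
    have hh : 0 < d ^ 2 + 2 * s ^ 2 := by positivity
    have d2 : HasDerivAt (fun s : ℝ => Real.exp (2 * s)) (2 * Real.exp (2 * s)) s := by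
      refine (((hasDerivAt_id s).const_mul 2).exp).congr_deriv ?_
      simp only [id]; ring
    refine (((((Real.hasDerivAt_exp s).const_mul 2).sub d2).const_mul (FF d)).sub
      (FF_sqrt_deriv (d ^ 2) 2 s hh)).congr_deriv ?_
    simp only [A]; ring
  · intro u hu v hv huv hpv
    have hu0 : 0 < u := hu.1
    have hv0 : 0 < v := hv.1
    have form : ∀ s, FF d * (2 * Real.exp s - 2 * Real.exp (2 * s)) + 2 * s * Real.exp (A s) =
        2 * Real.exp (3 * s / 2) *
          (s * Real.exp (A s - 3 * s / 2) - 2 * FF d * Real.sinh (s / 2)) := by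
      intro s
      have e1 : Real.exp (2 * s) = Real.exp s * Real.exp s := by
        rw [← Real.exp_add]; congr 1; ring
      have e2 : Real.exp (3 * s / 2) = Real.exp s * Real.exp (s / 2) := by
        rw [← Real.exp_add]; congr 1; ring
      have e3 : Real.exp (A s) = Real.exp (3 * s / 2) * Real.exp (A s - 3 * s / 2) := by
        rw [← Real.exp_add]; congr 1; ring
      have := exp_sub_one_sinh s
      rw [e3, e1, e2]
      linear_combination (-2 * FF d * Real.exp s) * this
    simp only [form] at hpv ⊢
    have hpv' : 0 < v * Real.exp (A v - 3 * v / 2) - 2 * FF d * Real.sinh (v / 2) :=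
      (mul_pos_iff_of_pos_left (by positivity)).1 hpv
    refine mul_nonneg (by positivity) ?_
    have hsh := sinh_aux (show 0 < u / 2 by linarith) (show u / 2 < v / 2 by linarith)
    have hAu : A u ^ 2 = d ^ 2 + 2 * u ^ 2 := Real.sq_sqrt (by positivity)
    have hAv : A v ^ 2 = d ^ 2 + 2 * v ^ 2 := Real.sq_sqrt (by positivity)
    have hAu0 : 4 / 3 * u ≤ A u := Real.le_sqrt_of_sq_le (by nlinarith)
    have hAv0 : 4 / 3 * v ≤ A v := Real.le_sqrt_of_sq_le (by nlinarith)
    have hA : A v - 3 * v / 2 ≤ A u - 3 * u / 2 := by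
      by_contra hcon
      push Not at hcon
      have h1 : 3 / 2 * (v - u) < A v - A u := by linarith
      have h2 : 0 < A v + A u := by linarith
      have h3 := mul_lt_mul_of_pos_right h1 h2
      nlinarith [mul_nonneg (sub_nonneg.2 huv.le)
        (show 0 ≤ A v + A u - 4 / 3 * (u + v) by linarith)]
    have hE := Real.exp_le_exp.2 hA
    have h5 : 0 ≤ u * v * (Real.exp (A u - 3 * u / 2) - Real.exp (A v - 3 * v / 2)) :=
      mul_nonneg (by positivity) (sub_nonneg.2 hE)
    have h6 : 0 < u * (v * Real.exp (A v - 3 * v / 2) - 2 * FF d * Real.sinh (v / 2)) :=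
      mul_pos hu0 hpv'
    have h7 := mul_le_mul_of_nonneg_left hsh (show 0 ≤ 4 * FF d by linarith)
    have h8 : 0 ≤ v * (u * Real.exp (A u - 3 * u / 2) - 2 * FF d * Real.sinh (u / 2)) := by
      nlinarith
    exact (mul_nonneg_iff_of_pos_left hv0).1 h8
  · have : A 0 = d := by simp [A, Real.sqrt_sq hd.le]
    simp [this]; linarith
  · simpa [A] using hτ

/-- Midpoint on the upper boundary, arbitrary endpoints. -/
lemma step2 {a b d t : ℝ} (hd : 0 < d) (hda : d ≤ a) (hdb : d ≤ b) (hb1 : b ≤ 1) (ht : 0 ≤ t)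
    (h : a ^ 2 + b ^ 2 = 2 * d ^ 2 + 2 * t ^ 2)
    (h0 : ∀ s, 0 ≤ s → a ^ 2 = d ^ 2 + 2 * s ^ 2 →
      FF a ≤ FF d * (2 * Real.exp s - Real.exp (2 * s))) :
    FF a * Real.exp (-t) + FF b * Real.exp t ≤ 2 * FF d := by
  have had : d ^ 2 ≤ a ^ 2 := by nlinarith
  have hbd : d ^ 2 ≤ b ^ 2 := by nlinarith
  set p := Real.sqrt ((a ^ 2 - d ^ 2) / 2) with hp
  have hp0 : 0 ≤ p := Real.sqrt_nonneg _
  have hp2 : p ^ 2 = (a ^ 2 - d ^ 2) / 2 := Real.sq_sqrt (by linarith)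
  have hpt : p ≤ t := by
    apply Real.sqrt_le_iff.2 ⟨ht, by linarith⟩
  let Bf : ℝ → ℝ := fun s => Real.sqrt (2 * d ^ 2 - a ^ 2 + 2 * s ^ 2)
  let Q : ℝ → ℝ := fun s => 2 * FF d * Real.exp s - FF (Bf s) * Real.exp (2 * s) - FF a
  have hBd : ∀ s ∈ Set.Icc p t, d ^ 2 ≤ 2 * d ^ 2 - a ^ 2 + 2 * s ^ 2 := by
    intro s hs
    have : p ^ 2 ≤ s ^ 2 := by nlinarith [hs.1]
    linarith
  have hder : ∀ s ∈ Set.Icc p t, HasDerivAt Q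
      (2 * Real.exp s * (FF d - FF (Bf s) * Real.exp s + s * Real.exp (Bf s) * Real.exp s)) s := by
    intro s hs
    have hh : 0 < 2 * d ^ 2 - a ^ 2 + 2 * s ^ 2 := lt_of_lt_of_le (by positivity) (hBd s hs)
    have d2 : HasDerivAt (fun s : ℝ => Real.exp (2 * s)) (2 * Real.exp (2 * s)) s := by
      refine (((hasDerivAt_id s).const_mul 2).exp).congr_deriv ?_
      simp only [id]; ring
    refine ((((Real.hasDerivAt_exp s).const_mul (2 * FF d)).sub
      ((FF_sqrt_deriv (2 * d ^ 2 - a ^ 2) 2 s hh).mul d2)).sub_const (FF a)).congr_deriv ?_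
    have e1 : Real.exp (2 * s) = Real.exp s * Real.exp s := by
      rw [← Real.exp_add]; congr 1; ring
    simp only [Bf]
    rw [e1]; ring
  have hmono : MonotoneOn Q (Set.Icc p t) := by
    apply monotoneOn_of_hasDerivWithinAt_nonneg (convex_Icc p t)
        (fun s hs => (hder s hs).continuousAt.continuousWithinAt)
        (fun s hs => (hder s (interior_subset hs)).hasDerivWithinAt)
    intro s hs
    have hs' := interior_subset hs
    have hs0 : 0 ≤ s := hp0.trans hs'.1
    have hB1 : d ≤ Bf s := Real.le_sqrt_of_sq_le (hBd s hs')
    have hF := FF_anti hd.le hB1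
    have he : Real.exp s - 1 ≤ s * Real.exp s := by
      have h1 := Real.add_one_le_exp (-s)
      have h2 : Real.exp s * Real.exp (-s) = 1 := by rw [← Real.exp_add]; simp
      nlinarith [Real.exp_pos s]
    have he0 : 1 ≤ Real.exp s := Real.one_le_exp hs0
    have hFB : FF (Bf s) * (Real.exp s - 1) ≤ Real.exp (Bf s) * (Real.exp s - 1) := by
      apply mul_le_mul_of_nonneg_right _ (by linarith)
      rw [FF]
      nlinarith [Real.exp_pos (Bf s)]
    have hB2 := mul_le_mul_of_nonneg_left he (Real.exp_pos (Bf s)).le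
    refine mul_nonneg (by positivity) ?_
    nlinarith
  have hQp : 0 ≤ Q p := by
    have e : Bf p = d := by
      simp only [Bf]
      rw [show 2 * d ^ 2 - a ^ 2 + 2 * p ^ 2 = d ^ 2 by linarith, Real.sqrt_sq hd.le]
    have := h0 p hp0 (by linarith)
    simp only [Q, e]
    linarith
  have hQt := hQp.trans (hmono ⟨le_rfl, hpt⟩ ⟨hpt, le_rfl⟩ hpt)
  have e : Bf t = b := by
    simp only [Bf]
    rw [show 2 * d ^ 2 - a ^ 2 + 2 * t ^ 2 = b ^ 2 by linarith, Real.sqrt_sq (hd.le.trans hdb)]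
  have e1 : Real.exp (-t) * Q t = 2 * FF d - (FF a * Real.exp (-t) + FF b * Real.exp t) := by
    simp only [Q, e]
    have e1 : Real.exp t * Real.exp (-t) = 1 := by rw [← Real.exp_add]; simp
    have e2 : Real.exp (2 * t) * Real.exp (-t) = Real.exp t := by
      rw [← Real.exp_add]; congr 1; ring
    linear_combination (2 * FF d) * e1 - FF b * e2
  have := mul_nonneg (Real.exp_pos (-t)).le hQt
  linarith

lemma main_ineq {ε δ a b c t : ℝ} (hε0 : 0 < ε) (hδ : δ ∈ Set.Ioo ε 1) (hg : g δ ε = 0)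
    (ht : 0 ≤ t) (ha : Real.sqrt (δ ^ 2 - ε ^ 2) ≤ a) (ha' : a ≤ δ)
    (hb : Real.sqrt (δ ^ 2 - ε ^ 2) ≤ b) (hb' : b ≤ δ)
    (hc : Real.sqrt (δ ^ 2 - ε ^ 2) ≤ c) 
    (h : a ^ 2 + b ^ 2 = 2 * c ^ 2 + 2 * t ^ 2) :
    FF a * Real.exp (-t) + FF b * Real.exp t ≤ 2 * FF c := by
  obtain ⟨h1, h2⟩ := hδ
  have hpos : 0 < δ ^ 2 - ε ^ 2 := by nlinarith
  unfold g at hg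
  set d := Real.sqrt (δ ^ 2 - ε ^ 2) with hd
  have hd0 : 0 < d := Real.sqrt_pos.2 hpos
  have hd2 : d ^ 2 = δ ^ 2 - ε ^ 2 := Real.sq_sqrt hpos.le
  have hd1 : d < 1 := by linarith
  have ha0 : 0 < a := hd0.trans_le ha
  have hb0 : 0 < b := hd0.trans_le hb
  rcases le_total t c with htc | hct
  · exact caseA ha0.le hb0.le ht htc h
  refine stepC ha0.le hb0.le hd0 hc hct h ?_
  intro t1 ht1 he
  refine step2 hd0 ha hb (by linarith) ht1 he ?_
  intro s hs hsa
  set τ := ε / Real.sqrt 2 with hτ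
  have hτ2 : τ ^ 2 = ε ^ 2 / 2 := by
    rw [hτ, div_pow, Real.sq_sqrt (by norm_num)]
  have hτ0 : 0 < τ := by positivity
  have hsτ : s ≤ τ := by
    apply le_of_sq_le_sq_aux _ hτ0.le
    nlinarith
  have hA : Real.sqrt (d ^ 2 + 2 * s ^ 2) = a := by
    rw [← hsa, Real.sqrt_sq ha0.le]
  have hB : Real.sqrt (d ^ 2 + 2 * τ ^ 2) = δ := by
    rw [show d ^ 2 + 2 * τ ^ 2 = δ ^ 2 by linarith, Real.sqrt_sq (by linarith)]
  have := step1 hd0 hd1 (t := s) (τ := τ) ⟨hs, hsτ⟩ (by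
    rw [hB]
    apply le_of_eq
    have e0 : Real.exp (δ - τ) * Real.exp τ = Real.exp δ := by
      rw [← Real.exp_add]; congr 1; ring
    have e1 : Real.exp (2 * τ) = Real.exp τ * Real.exp τ := by
      rw [← Real.exp_add]; congr 1; ring
    rw [FF, FF, ← e0, e1]
    linear_combination (-Real.exp τ) * hg)
  rwa [hA] at this

lemma Bp_eq (δ : ℝ) (x : ℝ × ℝ) (u t : ℝ) (h : x.1 = u + t) :
    Bp δ x = Real.exp (u - δ) / (1 - δ) *
      (FF (Real.sqrt (δ ^ 2 + x.1 ^ 2 - x.2)) * Real.exp t) := by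
  unfold Bp FF
  set s := Real.sqrt (δ ^ 2 + x.1 ^ 2 - x.2)
  rw [h, show u + t + s - δ = (u - δ) + (s + t) by ring, Real.exp_add, Real.exp_add s t]
  ring

lemma wlog_ineq {ε δ : ℝ} (hε0 : 0 < ε) 
    (hδ : δ ∈ Set.Ioo ε 1) (hg : g δ ε = 0)
    (xm xp : ℝ × ℝ) (hm : xm ∈ Omega ε) (hp : xp ∈ Omega ε)
    (hmid : (1 / 2 : ℝ) • (xm + xp) ∈ Omega ε) (hle : xm.1 ≤ xp.1) :
    (1 / 2) * Bp δ xm + (1 / 2) * Bp δ xp ≤ Bp δ ((1 / 2 : ℝ) • (xm + xp)) := by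
  have hx1 : ((1 / 2 : ℝ) • (xm + xp)).1 = (xm.1 + xp.1) / 2 := by simp; ring
  have hx2 : ((1 / 2 : ℝ) • (xm + xp)).2 = (xm.2 + xp.2) / 2 := by simp; ring
  have hδ' := hδ
  obtain ⟨h1, h2⟩ := hδ'
  have hpos : 0 < δ ^ 2 - ε ^ 2 := by nlinarith
  set x0 := (1 / 2 : ℝ) • (xm + xp) with hx0
  have est : ∀ x ∈ Omega ε,
      Real.sqrt (δ ^ 2 - ε ^ 2) ≤ Real.sqrt (δ ^ 2 + x.1 ^ 2 - x.2) ∧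
      Real.sqrt (δ ^ 2 + x.1 ^ 2 - x.2) ≤ δ ∧
      Real.sqrt (δ ^ 2 + x.1 ^ 2 - x.2) ^ 2 = δ ^ 2 + x.1 ^ 2 - x.2 := by
    rintro x ⟨hxa, hxb⟩
    exact ⟨Real.sqrt_le_sqrt (by linarith), Real.sqrt_le_iff.2 ⟨by linarith, by linarith⟩,
      Real.sq_sqrt (by linarith)⟩
  obtain ⟨m1, m2, m3⟩ := est xm hm
  obtain ⟨p1, p2, p3⟩ := est xp hp
  obtain ⟨c1, c2, c3⟩ := est x0 hmid
  have key := main_ineq (t := (xp.1 - xm.1) / 2) hε0 hδ hg (by linarith) m1 m2 p1 p2 c1 (by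
    rw [m3, p3, c3, hx1, hx2]; ring)
  rw [Bp_eq δ xm ((xm.1 + xp.1) / 2) (-((xp.1 - xm.1) / 2)) (by ring),
    Bp_eq δ xp ((xm.1 + xp.1) / 2) ((xp.1 - xm.1) / 2) (by ring),
    Bp_eq δ x0 ((xm.1 + xp.1) / 2) 0 (by rw [hx1]; ring), Real.exp_zero]
  have hw : 0 ≤ Real.exp ((xm.1 + xp.1) / 2 - δ) / (1 - δ) :=
    div_nonneg (Real.exp_pos _).le (by linarith)
  have := mul_le_mul_of_nonneg_left key hw
  linarith

/-- Dyadic midpoint concavity of `B⁺_δ` over `Ω_ε`, where `δ ∈ (ε,1)` solves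
`g(δ,ε) = 0`. -/
theorem stmt18 (ε δ : ℝ) (hε0 : 0 < ε) (hε1 : ε < Real.sqrt 2 * Real.log 2)
    (hδ : δ ∈ Set.Ioo ε 1) (hg : g δ ε = 0)
    (xm xp : ℝ × ℝ) (hm : xm ∈ Omega ε) (hp : xp ∈ Omega ε)
    (hmid : (1 / 2 : ℝ) • (xm + xp) ∈ Omega ε) :
    (1 / 2) * Bp δ xm + (1 / 2) * Bp δ xp ≤ Bp δ ((1 / 2 : ℝ) • (xm + xp)) := by
  rcases le_total xm.1 xp.1 with hle | hle
  · exact wlog_ineq hε0 hδ hg xm xp hm hp hmid hle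
  · have := wlog_ineq hε0 hδ hg xp xm hp hm (by rwa [add_comm]) hle
    rw [add_comm xp xm] at this
    linarith
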